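/- Let X be a locally compact Polish space with a complete compatible metric d, and let G be a group of homeomorphisms of X such that: (i) the family {φ : φ ∈ G} is equicontinuous on every compact subset of X; and (ii) whenever a sequence of composition operators C_{φₙ} with φₙ ∈ G converges in the strong operator topology to a surjective lattice isometry T of (C₀(X), ‖·‖_∞), then T = C_φ for some φ ∈ G. Let L be a locally compact Polish space with no isolated points. For φ ∈ G define ψ_φ : X × L → X × L by ψ_φ(k, ℓ) = (φ(k), ℓ). Then there exists a norm N on C₀(X × L) such that: N is a lattice norm; N is equivalent to the supremum norm; every composition operator C_{ψ_φ} with φ ∈ G satisfies N(C_{ψ_φ} x) = N(x) for all x ∈ C₀(X × L); and conversely every lattice isomorphism T of C₀(X × L) satisfying N(T x) = N(x) for all x equals C_{ψ_φ} for some φ ∈ G. -/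

import Mathlib

open ZeroAtInfty Filter Topology Metric

noncomputable section

/-- Pointwise supremum of two continuous functions vanishing at infinity. -/
def c0sup {X : Type*} [TopologicalSpace X] (f g : C₀(X, ℝ)) : C₀(X, ℝ) where
  toFun := fun t => max (f t) (g t)
  continuous_toFun := (map_continuous f).max (map_continuous g)
  zero_at_infty' := by simpa using (zero_at_infty f).max (zero_at_infty g)

/-- Composition operator `f ↦ f ∘ φ` on `C₀(X)` induced by a homeomorphism `φ`. -/
def compOp {X : Type*} [TopologicalSpace X] (φ : X ≃ₜ X) (f : C₀(X, ℝ)) : C₀(X, ℝ) where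
  toFun := fun t => f (φ t)
  continuous_toFun := (map_continuous f).comp φ.continuous
  zero_at_infty' := (zero_at_infty f).comp φ.map_cocompact.le

/-!
Choose a dense sequence `zₙ` in `X × L` with pairwise distinct `L`-coordinates `pₙ`, which exists
because `L` has no isolated points, and let `N f = ‖f‖ + sup_{φ ∈ G} ∑ₙ 3⁻ⁿ |f (ψ_φ zₙ)|`.
A lattice isomorphism has the form `f ↦ w · (f ∘ σ)`. The orbit of `zₙ` lies in `X × {pₙ}`, hence
is nowhere dense, and bump functions concentrated off the first few orbits do not see the
supremum; applied to `T` and `T⁻¹` this gives `w ≤ 1` and `w⁻¹ ≤ 1` on a dense set. So `C_σ`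
preserves the supremum. As `3⁻ᵐ` exceeds the sum of all later weights, every open set
containing `σ z₀, …, σ zₘ` then contains `ψ_φ z₀, …, ψ_φ zₘ` for some `φ ∈ G`. Separating the
`pₙ` shows that `σ` preserves the `L`-coordinate and that its `X`-coordinate is a pointwise limit
of elements of `G`; by equicontinuity the composition operators converge strongly, and closedness
puts the limit in `G`.
-/

section C0Functions

variable {Y : Type*} [TopologicalSpace Y]

lemma abs_apply_le_norm (f : C₀(Y, ℝ)) (t : Y) : |f t| ≤ ‖f‖ :=
  f.toBCF.norm_coe_le_norm t

lemma norm_le_of_forall_abs_le {f : C₀(Y, ℝ)} {C : ℝ} (hC : 0 ≤ C) (h : ∀ t, |f t| ≤ C) :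
    ‖f‖ ≤ C :=
  (BoundedContinuousFunction.norm_le (f := f.toBCF) hC).2 h

@[simp] lemma c0sup_apply (f g : C₀(Y, ℝ)) (t : Y) : c0sup f g t = max (f t) (g t) := rfl

@[simp] lemma compOp_apply (φ : Y ≃ₜ Y) (f : C₀(Y, ℝ)) (t : Y) : compOp φ f t = f (φ t) := rfl

lemma norm_compOp_le (φ : Y ≃ₜ Y) (f : C₀(Y, ℝ)) : ‖compOp φ f‖ ≤ ‖f‖ :=
  norm_le_of_forall_abs_le (norm_nonneg f) fun t => abs_apply_le_norm f (φ t)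

lemma compOp_symm_compOp (φ : Y ≃ₜ Y) (f : C₀(Y, ℝ)) : compOp φ.symm (compOp φ f) = f := by
  ext t
  simp only [compOp_apply, Homeomorph.apply_symm_apply]

/-- The composition operator `C_φ` as a surjective linear isometry of `C₀(Y)`. -/
def compOpIsometry (φ : Y ≃ₜ Y) : C₀(Y, ℝ) ≃ₗᵢ[ℝ] C₀(Y, ℝ) where
  toFun := compOp φ
  invFun := compOp φ.symm
  map_add' _ _ := rfl
  map_smul' _ _ := rfl
  left_inv := compOp_symm_compOp φ
  right_inv := compOp_symm_compOp φ.symm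
  norm_map' f := (norm_compOp_le φ f).antisymm <|
    (congrArg norm (compOp_symm_compOp φ f)).symm.trans_le (norm_compOp_le φ.symm (compOp φ f))

variable [T2Space Y] [LocallyCompactSpace Y]

lemma exists_one_on_zero_off {K U : Set Y} (hK : IsCompact K) (hU : IsOpen U) (hKU : K ⊆ U) :
    ∃ f : C₀(Y, ℝ), (∀ t ∈ K, f t = 1) ∧ (∀ t ∉ U, f t = 0) ∧ ‖f‖ ≤ 1 := by
  obtain ⟨f, hf_one, hf_zero, hf_supp, hf_mem⟩ := exists_continuous_one_zero_of_isCompact hK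
    hU.isClosed_compl (Set.disjoint_compl_right_iff_subset.2 hKU)
  refine ⟨⟨f, hf_supp.is_zero_at_infty⟩, fun t ht => hf_one ht, fun t ht => hf_zero ht,
    norm_le_of_forall_abs_le zero_le_one fun t => ?_⟩
  exact (abs_of_nonneg (hf_mem t).1).trans_le (hf_mem t).2

lemma exists_apply_eq_one_zero_off {s : Y} {U : Set Y} (hU : IsOpen U) (hs : s ∈ U) :
    ∃ f : C₀(Y, ℝ), f s = 1 ∧ (∀ t ∉ U, f t = 0) ∧ ‖f‖ ≤ 1 := by
  obtain ⟨f, hf_one, hf_zero, hf_norm⟩ :=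
    exists_one_on_zero_off isCompact_singleton hU (Set.singleton_subset_iff.2 hs)
  exact ⟨f, hf_one s rfl, hf_zero, hf_norm⟩

lemma exists_apply_eq_one (s : Y) : ∃ f : C₀(Y, ℝ), f s = 1 := by
  obtain ⟨f, hf, -⟩ := exists_apply_eq_one_zero_off isOpen_univ (Set.mem_univ s)
  exact ⟨f, hf⟩

lemma eq_of_forall_mul_apply_eq {s t : Y} {c : ℝ} (h : ∀ f : C₀(Y, ℝ), c * f s = f t) :
    s = t := by
  by_contra hst
  obtain ⟨f, hft, hfs, -⟩ := exists_apply_eq_one_zero_off (s := t) (U := {s}ᶜ)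
    isOpen_compl_singleton (Ne.symm hst)
  have hc := h f
  rw [hft, hfs s (by simp), mul_zero] at hc
  exact zero_ne_one hc

end C0Functions

section LatticeFunctionals

variable {Y : Type*} [TopologicalSpace Y] {Λ : C₀(Y, ℝ) →L[ℝ] ℝ}

lemma exists_nonneg_map_eq_zero_le_on (hΛ : ∀ f g, Λ (c0sup f g) = max (Λ f) (Λ g))
    (hker : ∀ s, ∃ g : C₀(Y, ℝ), (∀ t, 0 ≤ g t) ∧ g s = 1 ∧ Λ g = 0)
    {K : Set Y} (hK : IsCompact K) (h : C₀(Y, ℝ)) :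
    ∃ g : C₀(Y, ℝ), (∀ t, 0 ≤ g t) ∧ Λ g = 0 ∧ ∀ t ∈ K, h t ≤ g t := by
  refine hK.induction_on (p := fun S => ∃ g : C₀(Y, ℝ), (∀ t, 0 ≤ g t) ∧ Λ g = 0 ∧
    ∀ t ∈ S, h t ≤ g t) ⟨0, by simp⟩ ?mono ?union ?nhds
  case mono =>
    rintro S S' hSS' ⟨g, hg_nonneg, hg_ker, hg⟩
    exact ⟨g, hg_nonneg, hg_ker, fun t ht => hg t (hSS' ht)⟩
  case union =>
    rintro S S' ⟨g, hg_nonneg, hg_ker, hg⟩ ⟨g', -, hg'_ker, hg'⟩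
    refine ⟨c0sup g g', fun t => le_max_of_le_left (hg_nonneg t),
      by rw [hΛ, hg_ker, hg'_ker, max_self], ?_⟩
    rintro t (ht | ht)
    · exact le_max_of_le_left (hg t ht)
    · exact le_max_of_le_right (hg' t ht)
  case nhds =>
    intro s _
    obtain ⟨g, hg_nonneg, hgs, hg_ker⟩ := hker s
    have h_lt : h s < ((|h s| + 1) • g) s := by
      simpa [hgs] using (le_abs_self (h s)).trans_lt (lt_add_one _)
    have h_ev : ∀ᶠ t in 𝓝 s, h t < ((|h s| + 1) • g) t :=
      (map_continuous h).continuousAt.eventually_lt (map_continuous _).continuousAt h_lt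
    refine ⟨_, mem_nhdsWithin_of_mem_nhds h_ev, (|h s| + 1) • g, fun t => ?_, by simp [hg_ker],
      fun t ht => ht.le⟩
    exact mul_nonneg (by positivity) (hg_nonneg t)

lemma map_nonpos_of_forall_exists_map_eq_zero (hΛ : ∀ f g, Λ (c0sup f g) = max (Λ f) (Λ g))
    (hker : ∀ s, ∃ g : C₀(Y, ℝ), (∀ t, 0 ≤ g t) ∧ g s = 1 ∧ Λ g = 0) (h : C₀(Y, ℝ)) :
    Λ h ≤ 0 := by
  have h_le : ∀ ε > 0, Λ h ≤ ‖Λ‖ * ε := by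
    intro ε hε
    obtain ⟨K, hK, hKh⟩ := mem_cocompact.1 ((zero_at_infty h).eventually_lt_const hε)
    obtain ⟨g, hg_nonneg, hg_ker, hg⟩ := exists_nonneg_map_eq_zero_le_on hΛ hker hK h
    have h_norm : ‖c0sup (h - g) 0‖ ≤ ε := by
      refine norm_le_of_forall_abs_le hε.le fun t => ?_
      rw [c0sup_apply, abs_of_nonneg (le_max_right _ _)]
      refine max_le (sub_le_iff_le_add.2 ?_) hε.le
      by_cases ht : t ∈ K
      · exact (hg t ht).trans (le_add_of_nonneg_left hε.le)
      · exact (hKh ht).le.trans (le_add_of_nonneg_right (hg_nonneg t))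
    calc Λ h = Λ (h - g) := by rw [map_sub, hg_ker, sub_zero]
      _ ≤ Λ (c0sup (h - g) 0) := (le_max_left _ _).trans_eq (hΛ _ _).symm
      _ ≤ ‖Λ (c0sup (h - g) 0)‖ := le_abs_self _
      _ ≤ ‖Λ‖ * ε := Λ.le_opNorm_of_le h_norm
  have h_lim : Tendsto (fun ε => ‖Λ‖ * ε) (𝓝[>] 0) (𝓝 0) :=
    ((continuous_const_mul ‖Λ‖).tendsto' 0 0 (mul_zero _)).mono_left nhdsWithin_le_nhds
  exact ge_of_tendsto h_lim (eventually_mem_nhdsWithin.mono h_le)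

variable [T2Space Y] [LocallyCompactSpace Y]

lemma exists_nonneg_apply_eq_one_map_eq_zero (hΛ : ∀ f g, Λ (c0sup f g) = max (Λ f) (Λ g))
    {s : Y} {f : C₀(Y, ℝ)} (hfs : f s = 0) (hf : Λ f ≠ 0) :
    ∃ g : C₀(Y, ℝ), (∀ t, 0 ≤ g t) ∧ g s = 1 ∧ Λ g = 0 := by
  obtain ⟨b, hb⟩ := exists_apply_eq_one s
  set k := (Λ b / Λ f) • f
  have hk : Λ (b - k) = 0 := by
    rw [map_sub, map_smul, smul_eq_mul, div_mul_cancel₀ _ hf, sub_self]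
  refine ⟨c0sup (b - k) 0, fun t => le_max_right _ _, ?_, by rw [hΛ, hk, map_zero, max_self]⟩
  simp [k, hfs, hb]

lemma exists_forall_apply_eq_zero_imp_map_eq_zero
    (hΛ : ∀ f g, Λ (c0sup f g) = max (Λ f) (Λ g)) (hne : ∃ f, Λ f ≠ 0) :
    ∃ s : Y, ∀ f : C₀(Y, ℝ), f s = 0 → Λ f = 0 := by
  by_contra! hcon
  have hker : ∀ s, ∃ g : C₀(Y, ℝ), (∀ t, 0 ≤ g t) ∧ g s = 1 ∧ Λ g = 0 := fun s => by
    obtain ⟨f, hfs, hf⟩ := hcon s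
    exact exists_nonneg_apply_eq_one_map_eq_zero hΛ hfs hf
  have h_nonpos := map_nonpos_of_forall_exists_map_eq_zero hΛ hker
  obtain ⟨f, hf⟩ := hne
  exact hf ((h_nonpos f).antisymm (by simpa using h_nonpos (-f)))

lemma exists_pos_forall_map_eq_mul_apply (hΛ : ∀ f g, Λ (c0sup f g) = max (Λ f) (Λ g))
    (hne : ∃ f, Λ f ≠ 0) : ∃ s : Y, ∃ c > 0, ∀ f, Λ f = c * f s := by
  obtain ⟨s, hs⟩ := exists_forall_apply_eq_zero_imp_map_eq_zero hΛ hne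
  obtain ⟨b, hb⟩ := exists_apply_eq_one s
  have h_rep : ∀ f, Λ f = Λ b * f s := fun f => by
    have h_ker := hs (f - f s • b) (by simp [hb])
    rw [map_sub, map_smul, smul_eq_mul, sub_eq_zero] at h_ker
    rw [h_ker, mul_comm]
  have h_nonneg : 0 ≤ Λ b := by
    have h_pos_part := h_rep (c0sup b 0)
    rw [hΛ, map_zero, c0sup_apply, hb] at h_pos_part
    simpa using h_pos_part
  refine ⟨s, Λ b, h_nonneg.lt_of_ne' fun h_zero => ?_, h_rep⟩
  obtain ⟨f, hf⟩ := hne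
  exact hf (by rw [h_rep, h_zero, zero_mul])

end LatticeFunctionals

section LatticeIsomorphisms

variable {Y Z : Type*} [TopologicalSpace Y] [TopologicalSpace Z] [T2Space Y]
  [LocallyCompactSpace Y]

lemma continuous_of_forall_apply_eq_mul
    {T : C₀(Y, ℝ) → C₀(Z, ℝ)} {σ : Z → Y} {w : Z → ℝ} (hw : ∀ t, w t ≠ 0)
    (hT : ∀ f t, T f t = w t * f (σ t)) : Continuous σ := by
  refine continuous_iff_continuousAt.2 fun t U hU => ?_
  obtain ⟨f, hf_one, hf_zero, -⟩ :=
    exists_apply_eq_one_zero_off isOpen_interior (mem_interior_iff_mem_nhds.2 hU)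
  have h_ne : ∀ᶠ t' in 𝓝 t, T f t' ≠ 0 :=
    (map_continuous (T f)).continuousAt.eventually_ne (by rw [hT, hf_one, mul_one]; exact hw t)
  refine mem_map.2 (h_ne.mono fun t' ht' => ?_)
  by_contra hU'
  exact ht' (by rw [hT, hf_zero _ fun h => hU' (interior_subset h), mul_zero])

lemma continuous_weight_of_forall_apply_eq_mul
    {T : C₀(Y, ℝ) → C₀(Z, ℝ)} {σ : Z → Y} {w : Z → ℝ} (hσ : Continuous σ)
    (hT : ∀ f t, T f t = w t * f (σ t)) : Continuous w := by
  refine continuous_iff_continuousAt.2 fun t => ?_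
  obtain ⟨f, hf⟩ := exists_apply_eq_one (σ t)
  have hfσ : ContinuousAt (fun t' => f (σ t')) t := ((map_continuous f).comp hσ).continuousAt
  have h_ne : ∀ᶠ t' in 𝓝 t, f (σ t') ≠ 0 := hfσ.eventually_ne (by rw [hf]; exact one_ne_zero)
  refine ((map_continuous (T f)).continuousAt.div hfσ h_ne.self_of_nhds).congr ?_
  filter_upwards [h_ne] with t' ht'
  rw [Pi.div_apply, hT, mul_div_cancel_right₀ _ ht']

variable [T2Space Z] [LocallyCompactSpace Z]

lemma exists_weighted_comp_of_map_c0sup (T : C₀(Y, ℝ) ≃L[ℝ] C₀(Z, ℝ))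
    (hT : ∀ f g, T (c0sup f g) = c0sup (T f) (T g)) :
    ∃ (σ : Z → Y) (w : Z → ℝ), Continuous σ ∧ (∀ t, 0 < w t) ∧
      ∀ f t, T f t = w t * f (σ t) := by
  have h_pt : ∀ t : Z, ∃ s : Y, ∃ c > 0, ∀ f, T f t = c * f s := by
    intro t
    let eval : C₀(Z, ℝ) →ₗ[ℝ] ℝ :=
      { toFun := fun f => f t, map_add' := fun _ _ => rfl, map_smul' := fun _ _ => rfl }
    let Λ : C₀(Y, ℝ) →L[ℝ] ℝ :=
      (eval.mkContinuous 1 fun f => (abs_apply_le_norm f t).trans_eq (one_mul _).symm).comp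
        (T : C₀(Y, ℝ) →L[ℝ] C₀(Z, ℝ))
    have hΛ : ∀ f, Λ f = T f t := fun _ => rfl
    obtain ⟨b, hb⟩ := exists_apply_eq_one t
    exact exists_pos_forall_map_eq_mul_apply (Λ := Λ)
      (fun f g => by simp only [hΛ, hT, c0sup_apply]) ⟨T.symm b, by simp [hΛ, hb]⟩
  choose σ w hw hσ using h_pt
  have h_rep : ∀ f t, T f t = w t * f (σ t) := fun f t => hσ t f
  exact ⟨σ, w, continuous_of_forall_apply_eq_mul (fun t => (hw t).ne') h_rep, hw, h_rep⟩

lemma exists_homeomorph_weight_of_map_c0sup (T : C₀(Y, ℝ) ≃L[ℝ] C₀(Z, ℝ))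
    (hT : ∀ f g, T (c0sup f g) = c0sup (T f) (T g)) :
    ∃ (σ : Z ≃ₜ Y) (w : C(Z, ℝ)), (∀ t, 0 < w t) ∧ ∀ f t, T f t = w t * f (σ t) := by
  have hT_symm : ∀ f g, T.symm (c0sup f g) = c0sup (T.symm f) (T.symm g) := fun f g => by
    rw [T.symm_apply_eq, hT, T.apply_symm_apply, T.apply_symm_apply]
  obtain ⟨σ, w, hσ, hw, hTσ⟩ := exists_weighted_comp_of_map_c0sup T hT
  obtain ⟨τ, v, hτ, -, hTτ⟩ := exists_weighted_comp_of_map_c0sup T.symm hT_symm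
  have h_left : ∀ t, τ (σ t) = t := fun t =>
    eq_of_forall_mul_apply_eq (c := w t * v (σ t)) fun f => by
      rw [mul_assoc, ← hTτ, ← hTσ, T.apply_symm_apply]
  have h_right : ∀ t, σ (τ t) = t := fun t =>
    eq_of_forall_mul_apply_eq (c := v t * w (τ t)) fun f => by
      rw [mul_assoc, ← hTσ, ← hTτ, T.symm_apply_apply]
  exact ⟨⟨⟨σ, τ, h_left, h_right⟩, hσ, hτ⟩,
    ⟨w, continuous_weight_of_forall_apply_eq_mul hσ hTσ⟩, hw, hTσ⟩

end LatticeIsomorphisms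

section OrbitSeminorm

variable {Y : Type*} [TopologicalSpace Y]

lemma tsum_one_third_pow : ∑' n, (1 / 3 : ℝ) ^ n = 3 / 2 := by
  rw [tsum_geometric_of_lt_one (by norm_num) (by norm_num)]
  norm_num

lemma sum_range_one_third_pow (m : ℕ) :
    ∑ n ∈ Finset.range m, (1 / 3 : ℝ) ^ n = 3 / 2 - 3 / 2 * (1 / 3) ^ m := by
  rw [geom_sum_eq (by norm_num)]
  ring

lemma summable_one_third_pow_mul_norm (f : C₀(Y, ℝ)) :
    Summable fun n : ℕ => (1 / 3 : ℝ) ^ n * ‖f‖ :=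
  (summable_geometric_of_lt_one (by norm_num) (by norm_num)).mul_right ‖f‖

lemma one_third_pow_mul_abs_le (z : ℕ → Y) (f : C₀(Y, ℝ)) (n : ℕ) :
    (1 / 3 : ℝ) ^ n * |f (z n)| ≤ (1 / 3) ^ n * ‖f‖ := by
  gcongr
  exact abs_apply_le_norm f (z n)

lemma summable_one_third_pow_mul_abs (z : ℕ → Y) (f : C₀(Y, ℝ)) :
    Summable fun n => (1 / 3 : ℝ) ^ n * |f (z n)| :=
  (summable_one_third_pow_mul_norm f).of_nonneg_of_le (fun n => by positivity)
    (one_third_pow_mul_abs_le z f)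

/-- The seminorm `f ↦ ∑ₙ 3⁻ⁿ |f (zₙ)|` on `C₀(Y)` attached to a sequence `z`. The ratio is
less than `1 / 2`, so that each weight exceeds the sum of all later ones. -/
def geomSeminorm (z : ℕ → Y) : Seminorm ℝ C₀(Y, ℝ) :=
  Seminorm.of (fun f => ∑' n, (1 / 3 : ℝ) ^ n * |f (z n)|)
    (fun f g => by
      rw [← (summable_one_third_pow_mul_abs z f).tsum_add (summable_one_third_pow_mul_abs z g)]
      refine (summable_one_third_pow_mul_abs z (f + g)).tsum_le_tsum (fun n => ?_)
        ((summable_one_third_pow_mul_abs z f).add (summable_one_third_pow_mul_abs z g))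
      rw [← mul_add]
      gcongr
      exact abs_add_le _ _)
    fun c f => by
      rw [← tsum_mul_left]
      refine tsum_congr fun n => ?_
      rw [ZeroAtInftyContinuousMap.smul_apply, smul_eq_mul, abs_mul, Real.norm_eq_abs]
      ring

lemma geomSeminorm_apply (z : ℕ → Y) (f : C₀(Y, ℝ)) :
    geomSeminorm z f = ∑' n, (1 / 3 : ℝ) ^ n * |f (z n)| := rfl

lemma geomSeminorm_mono (z : ℕ → Y) {f g : C₀(Y, ℝ)} (h : ∀ t, |f t| ≤ |g t|) :
    geomSeminorm z f ≤ geomSeminorm z g := by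
  refine (summable_one_third_pow_mul_abs z f).tsum_le_tsum (fun n => ?_)
    (summable_one_third_pow_mul_abs z g)
  exact mul_le_mul_of_nonneg_left (h (z n)) (by positivity)

lemma geomSeminorm_le_of_forall_eq_zero (z : ℕ → Y) {f : C₀(Y, ℝ)} {s : Finset ℕ}
    (hf : ∀ n ∈ s, f (z n) = 0) :
    geomSeminorm z f ≤ (3 / 2 - ∑ n ∈ s, (1 / 3 : ℝ) ^ n) * ‖f‖ := by
  have h_sum : ∑ n ∈ s, ((1 / 3 : ℝ) ^ n * ‖f‖ - (1 / 3) ^ n * |f (z n)|)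
      = (∑ n ∈ s, (1 / 3 : ℝ) ^ n) * ‖f‖ := by
    rw [Finset.sum_mul]
    exact Finset.sum_congr rfl fun n hn => by rw [hf n hn, abs_zero, mul_zero, sub_zero]
  have h_le := ((summable_one_third_pow_mul_norm f).sub
    (summable_one_third_pow_mul_abs z f)).sum_le_tsum s
    fun n _ => sub_nonneg.2 (one_third_pow_mul_abs_le z f n)
  rw [h_sum, (summable_one_third_pow_mul_norm f).tsum_sub (summable_one_third_pow_mul_abs z f),
    tsum_mul_right, tsum_one_third_pow, ← geomSeminorm_apply] at h_le
  linarith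

lemma geomSeminorm_le (z : ℕ → Y) (f : C₀(Y, ℝ)) : geomSeminorm z f ≤ 3 / 2 * ‖f‖ := by
  simpa using geomSeminorm_le_of_forall_eq_zero z (f := f) (s := ∅) (by simp)

lemma sum_le_geomSeminorm (z : ℕ → Y) {f : C₀(Y, ℝ)} {s : Finset ℕ}
    (hf : ∀ n ∈ s, f (z n) = 1) : ∑ n ∈ s, (1 / 3 : ℝ) ^ n ≤ geomSeminorm z f := by
  refine (Finset.sum_congr rfl fun n hn => ?_).trans_le
    ((summable_one_third_pow_mul_abs z f).sum_le_tsum s fun n _ => by positivity)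
  rw [hf n hn, abs_one, mul_one]

/-- The seminorm `f ↦ sup_{h ∈ H} ∑ₙ 3⁻ⁿ |f (h zₙ)|`, the `H`-invariant hull of
`geomSeminorm z`. -/
def orbitSeminorm (H : Subgroup (Y ≃ₜ Y)) (z : ℕ → Y) : Seminorm ℝ C₀(Y, ℝ) :=
  ⨆ h : H, geomSeminorm fun n => (h : Y ≃ₜ Y) (z n)

variable (H : Subgroup (Y ≃ₜ Y)) (z : ℕ → Y)

lemma bddAbove_range_geomSeminorm_apply (f : C₀(Y, ℝ)) :
    BddAbove (Set.range fun h : H => geomSeminorm (fun n => (h : Y ≃ₜ Y) (z n)) f) :=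
  ⟨3 / 2 * ‖f‖, Set.forall_mem_range.2 fun _ => geomSeminorm_le _ f⟩

lemma orbitSeminorm_apply (f : C₀(Y, ℝ)) :
    orbitSeminorm H z f = ⨆ h : H, geomSeminorm (fun n => (h : Y ≃ₜ Y) (z n)) f :=
  Seminorm.iSup_apply (Seminorm.bddAbove_range_iff.2 (bddAbove_range_geomSeminorm_apply H z))

lemma geomSeminorm_le_orbitSeminorm (f : C₀(Y, ℝ)) :
    geomSeminorm z f ≤ orbitSeminorm H z f := by
  rw [orbitSeminorm_apply]
  exact le_ciSup (bddAbove_range_geomSeminorm_apply H z f) 1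

variable {H z}

lemma orbitSeminorm_le_of_forall {f : C₀(Y, ℝ)} {C : ℝ}
    (h_le : ∀ h ∈ H, geomSeminorm (fun n => h (z n)) f ≤ C) : orbitSeminorm H z f ≤ C := by
  rw [orbitSeminorm_apply]
  exact ciSup_le fun h => h_le h h.2

lemma orbitSeminorm_mono {f g : C₀(Y, ℝ)} (hfg : ∀ t, |f t| ≤ |g t|) :
    orbitSeminorm H z f ≤ orbitSeminorm H z g := by
  rw [orbitSeminorm_apply, orbitSeminorm_apply]
  exact ciSup_mono (bddAbove_range_geomSeminorm_apply H z g) fun _ => geomSeminorm_mono _ hfg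

lemma orbitSeminorm_compOp {ψ : Y ≃ₜ Y} (hψ : ψ ∈ H) (f : C₀(Y, ℝ)) :
    orbitSeminorm H z (compOp ψ f) = orbitSeminorm H z f := by
  rw [orbitSeminorm_apply, orbitSeminorm_apply]
  exact (Equiv.mulLeft (⟨ψ, hψ⟩ : H)).iSup_comp
    (g := fun h : H => geomSeminorm (fun n => (h : Y ≃ₜ Y) (z n)) f)

/-- The norm `‖f‖_∞ + sup_{h ∈ H} ∑ₙ 3⁻ⁿ |f (h zₙ)|` displaying `H`. -/
def displayNorm (H : Subgroup (Y ≃ₜ Y)) (z : ℕ → Y) : Seminorm ℝ C₀(Y, ℝ) :=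
  normSeminorm ℝ C₀(Y, ℝ) + orbitSeminorm H z

lemma displayNorm_apply (f : C₀(Y, ℝ)) :
    displayNorm H z f = ‖f‖ + orbitSeminorm H z f := rfl

lemma displayNorm_mono {f g : C₀(Y, ℝ)} (hfg : ∀ t, |f t| ≤ |g t|) :
    displayNorm H z f ≤ displayNorm H z g :=
  add_le_add (norm_le_of_forall_abs_le (norm_nonneg g) fun t =>
    (hfg t).trans (abs_apply_le_norm g t)) (orbitSeminorm_mono hfg)

lemma norm_le_displayNorm (f : C₀(Y, ℝ)) : ‖f‖ ≤ displayNorm H z f :=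
  le_add_of_nonneg_right (apply_nonneg (orbitSeminorm H z) f)

lemma displayNorm_le (f : C₀(Y, ℝ)) : displayNorm H z f ≤ 5 / 2 * ‖f‖ := by
  have h_orbit : orbitSeminorm H z f ≤ 3 / 2 * ‖f‖ :=
    orbitSeminorm_le_of_forall fun _ _ => geomSeminorm_le _ f
  rw [displayNorm_apply]
  linarith

lemma displayNorm_compOp {ψ : Y ≃ₜ Y} (hψ : ψ ∈ H) (f : C₀(Y, ℝ)) :
    displayNorm H z (compOp ψ f) = displayNorm H z f := by
  rw [displayNorm_apply, displayNorm_apply, orbitSeminorm_compOp hψ]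
  exact congrArg (· + _) ((compOpIsometry ψ).norm_map f)

end OrbitSeminorm

section DisplayNormIsometries

variable {Y : Type*} [TopologicalSpace Y]

/-- The orbit of a point under a group of homeomorphisms. -/
def homeoOrbit (H : Subgroup (Y ≃ₜ Y)) (y : Y) : Set Y := {t | ∃ h ∈ H, h y = t}

variable {H : Subgroup (Y ≃ₜ Y)} {z : ℕ → Y}

lemma orbitSeminorm_compOp_of_displayNorm_compOp {σ : Y ≃ₜ Y} {f : C₀(Y, ℝ)}
    (hσ : displayNorm H z (compOp σ f) = displayNorm H z f) :
    orbitSeminorm H z (compOp σ f) = orbitSeminorm H z f := by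
  have h_norm : ‖compOp σ f‖ = ‖f‖ := (compOpIsometry σ).norm_map f
  rw [displayNorm_apply, displayNorm_apply, h_norm] at hσ
  exact add_left_cancel hσ

variable [T2Space Y] [LocallyCompactSpace Y]

lemma exists_apply_eq_one_orbitSeminorm_le {y : Y} (hy : ∀ n, y ∉ closure (homeoOrbit H (z n)))
    {ε : ℝ} (hε : 0 < ε) : ∃ f : C₀(Y, ℝ), f y = 1 ∧ ‖f‖ ≤ 1 ∧ orbitSeminorm H z f ≤ ε := by
  obtain ⟨M, hM⟩ := exists_pow_lt_of_lt_one (show 0 < 2 / 3 * ε by positivity)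
    (show (1 / 3 : ℝ) < 1 by norm_num)
  obtain ⟨f, hfy, hf_zero, hf_norm⟩ := exists_apply_eq_one_zero_off
    (U := ⋂ n ∈ Finset.range M, (closure (homeoOrbit H (z n)))ᶜ)
    (isOpen_biInter_finset fun n _ => isClosed_closure.isOpen_compl)
    (Set.mem_iInter₂.2 fun n _ => hy n)
  refine ⟨f, hfy, hf_norm, orbitSeminorm_le_of_forall fun h hh => ?_⟩
  have hf_orbit : ∀ n ∈ Finset.range M, f (h (z n)) = 0 := fun n hn =>
    hf_zero _ fun h_mem => Set.mem_iInter₂.1 h_mem n hn (subset_closure ⟨h, hh, rfl⟩)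
  calc geomSeminorm (fun n => h (z n)) f
      ≤ (3 / 2 - ∑ n ∈ Finset.range M, (1 / 3 : ℝ) ^ n) * ‖f‖ :=
        geomSeminorm_le_of_forall_eq_zero _ hf_orbit
    _ = 3 / 2 * (1 / 3) ^ M * ‖f‖ := by rw [sum_range_one_third_pow, sub_sub_cancel]
    _ ≤ 3 / 2 * (1 / 3) ^ M * 1 := by gcongr
    _ ≤ ε := by linarith

lemma dense_setOf_forall_notMem_closure_homeoOrbit
    (hz : ∀ n, IsNowhereDense (homeoOrbit H (z n))) :
    Dense {y | ∀ n, y ∉ closure (homeoOrbit H (z n))} := by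
  have h_dense : Dense (⋂ n, (closure (homeoOrbit H (z n)))ᶜ) :=
    dense_iInter_of_isOpen (fun n => isClosed_closure.isOpen_compl)
      fun n => interior_eq_empty_iff_dense_compl.1 (hz n)
  exact h_dense.mono fun y hy n => Set.mem_iInter.1 hy n

lemma weight_le_one_of_displayNorm_le (hz : ∀ n, IsNowhereDense (homeoOrbit H (z n)))
    {T : C₀(Y, ℝ) → C₀(Y, ℝ)} {σ : Y ≃ₜ Y} {w : Y → ℝ} (hw : Continuous w)
    (hT : ∀ f t, T f t = w t * f (σ t)) (hN : ∀ f, displayNorm H z (T f) ≤ displayNorm H z f)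
    (t : Y) : w t ≤ 1 := by
  have h_le : ∀ s, (∀ n, σ s ∉ closure (homeoOrbit H (z n))) → w s ≤ 1 := by
    refine fun s hs => le_of_forall_pos_le_add fun ε hε => ?_
    obtain ⟨f, hf_one, hf_norm, hf_orbit⟩ := exists_apply_eq_one_orbitSeminorm_le hs hε
    calc w s = T f s := by rw [hT, hf_one, mul_one]
      _ ≤ ‖T f‖ := (le_abs_self _).trans (abs_apply_le_norm _ s)
      _ ≤ displayNorm H z f := (norm_le_displayNorm _).trans (hN f)
      _ ≤ 1 + ε := add_le_add hf_norm hf_orbit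
  have h_dense := (dense_setOf_forall_notMem_closure_homeoOrbit hz).preimage σ.isOpenMap
  exact (isClosed_le hw continuous_const).closure_subset_iff.2 h_le (h_dense t)

lemma exists_forall_eq_compOp_of_displayNorm (hz : ∀ n, IsNowhereDense (homeoOrbit H (z n)))
    (T : C₀(Y, ℝ) ≃L[ℝ] C₀(Y, ℝ)) (hT : ∀ f g, T (c0sup f g) = c0sup (T f) (T g))
    (hN : ∀ f, displayNorm H z (T f) = displayNorm H z f) :
    ∃ σ : Y ≃ₜ Y, ∀ f, T f = compOp σ f := by
  obtain ⟨σ, w, hw, hTσ⟩ := exists_homeomorph_weight_of_map_c0sup T hT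
  have hT_symm : ∀ f t, T.symm f t = (w (σ.symm t))⁻¹ * f (σ.symm t) := fun f t => by
    rw [← T.apply_symm_apply f, hTσ, T.symm_apply_apply, σ.apply_symm_apply,
      inv_mul_cancel_left₀ (hw _).ne']
  have hN_symm : ∀ f, displayNorm H z (T.symm f) = displayNorm H z f := fun f => by
    rw [← hN, T.apply_symm_apply]
  have hw_le : ∀ t, w t ≤ 1 :=
    weight_le_one_of_displayNorm_le hz w.continuous hTσ fun f => (hN f).le
  have hw_inv_le : ∀ t, (w (σ.symm t))⁻¹ ≤ 1 :=
    weight_le_one_of_displayNorm_le hz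
      ((w.continuous.comp σ.symm.continuous).inv₀ fun t => (hw _).ne') hT_symm
      fun f => (hN_symm f).le
  have hw_one : ∀ t, w t = 1 := fun t => (hw_le t).antisymm <| by
    simpa only [σ.symm_apply_apply, inv_le_one₀ (hw t)] using hw_inv_le (σ t)
  refine ⟨σ, fun f => ?_⟩
  ext t
  rw [hTσ, hw_one, one_mul, compOp_apply]

lemma exists_mem_forall_apply_mem_of_orbitSeminorm_compOp {σ : Y ≃ₜ Y}
    (hσ : ∀ f, orbitSeminorm H z (compOp σ f) = orbitSeminorm H z f) {U : Set Y}
    (hU : IsOpen U) {m : ℕ} (hσU : ∀ k ≤ m, σ (z k) ∈ U) : ∃ h ∈ H, ∀ i ≤ m, h (z i) ∈ U := by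
  by_contra! h_miss
  obtain ⟨f, hf_one, hf_zero, hf_norm⟩ := exists_one_on_zero_off
    (K := (fun k => σ (z k)) '' Set.Iic m) ((Set.finite_Iic m).image _).isCompact hU
    (Set.image_subset_iff.2 hσU)
  have h_lower : ∑ k ∈ Finset.range (m + 1), (1 / 3 : ℝ) ^ k ≤ orbitSeminorm H z f := by
    rw [← hσ]
    refine (sum_le_geomSeminorm z fun k hk => ?_).trans (geomSeminorm_le_orbitSeminorm H z _)
    exact hf_one _ ⟨k, Finset.mem_range_succ_iff.1 hk, rfl⟩
  have h_upper : orbitSeminorm H z f ≤ 3 / 2 - (1 / 3) ^ m := by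
    refine orbitSeminorm_le_of_forall fun h hh => ?_
    obtain ⟨i, him, hi⟩ := h_miss h hh
    have h_pow : (1 / 3 : ℝ) ^ m ≤ (1 / 3) ^ i :=
      pow_le_pow_of_le_one (by norm_num) (by norm_num) him
    have h_pow_le_one : (1 / 3 : ℝ) ^ i ≤ 1 := pow_le_one₀ (by norm_num) (by norm_num)
    calc geomSeminorm (fun n => h (z n)) f
        ≤ (3 / 2 - ∑ n ∈ {i}, (1 / 3 : ℝ) ^ n) * ‖f‖ :=
          geomSeminorm_le_of_forall_eq_zero _ (by simpa using hf_zero _ hi)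
      _ ≤ (3 / 2 - (1 / 3) ^ i) * 1 := by
          rw [Finset.sum_singleton]
          exact mul_le_mul_of_nonneg_left hf_norm (by linarith)
      _ ≤ 3 / 2 - (1 / 3) ^ m := by linarith
  have h_pos : (0 : ℝ) < (1 / 3) ^ m := by positivity
  rw [sum_range_one_third_pow, pow_succ] at h_lower
  linarith

end DisplayNormIsometries

section TransversalSequences

lemma exists_injective_forall_mem_of_infinite {α : Type*} {S : ℕ → Set α}
    (hS : ∀ n, (S n).Infinite) : ∃ p : ℕ → α, Function.Injective p ∧ ∀ n, p n ∈ S n := by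
  classical
  choose t ht_sub ht_card using fun n => (hS n).exists_subset_card_eq (n + 1)
  have h_hall : ∀ s : Finset ℕ, s.card ≤ (s.biUnion t).card := fun s => by
    rcases s.eq_empty_or_nonempty with rfl | hs
    · simp
    · have h_range : s ⊆ Finset.range (s.max' hs + 1) := fun n hn =>
        Finset.mem_range_succ_iff.2 (s.le_max' n hn)
      calc s.card ≤ s.max' hs + 1 := (Finset.card_le_card h_range).trans_eq (Finset.card_range _)
        _ = (t (s.max' hs)).card := (ht_card _).symm
        _ ≤ (s.biUnion t).card :=
          Finset.card_le_card (Finset.subset_biUnion_of_mem t (s.max'_mem hs))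
  obtain ⟨p, hp_inj, hp⟩ := (Finset.all_card_le_biUnion_card_iff_exists_injective t).1 h_hall
  exact ⟨p, hp_inj, fun n => ht_sub n (hp n)⟩

lemma eq_of_forall_exists_le_eq {α : Type*} {p q : ℕ → α} (hp : Function.Injective p)
    (h : ∀ m, ∃ k ≤ m, q k = p m) (m : ℕ) : q m = p m := by
  induction m using Nat.strong_induction_on with
  | _ m ih =>
    obtain ⟨k, hkm, hk⟩ := h m
    rcases hkm.eq_or_lt with rfl | hkm
    · exact hk
    · exact absurd (hp ((ih k hkm).symm.trans hk)) hkm.ne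

variable {Y Z : Type*} [TopologicalSpace Y] [TopologicalSpace Z] [T1Space Z]

lemma exists_denseRange_injective_comp [SecondCountableTopology Y] [Nonempty Y] {f : Y → Z}
    (hf : IsOpenMap f) (hZ : ∀ c : Z, ¬IsOpen {c}) :
    ∃ z : ℕ → Y, DenseRange z ∧ Function.Injective fun n => f (z n) := by
  have h_basis := TopologicalSpace.isBasis_countableBasis Y
  obtain ⟨o₀, ho₀, -⟩ := h_basis.exists_nonempty_subset Set.univ_nonempty isOpen_univ
  obtain ⟨b, hb⟩ := (TopologicalSpace.countable_countableBasis Y).exists_eq_range ⟨o₀, ho₀⟩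
  have hb_mem : ∀ n, b n ∈ TopologicalSpace.countableBasis Y := fun n => hb ▸ ⟨n, rfl⟩
  have hb_infinite : ∀ n, (f '' b n).Infinite := fun n h_fin => by
    obtain ⟨y, hy⟩ := TopologicalSpace.nonempty_of_mem_countableBasis (hb_mem n)
    have h_nhds : f '' b n ∈ 𝓝 (f y) :=
      (hf _ (h_basis.isOpen (hb_mem n))).mem_nhds (Set.mem_image_of_mem f hy)
    exact hZ _ (isOpen_singleton_of_finite_mem_nhds _ h_nhds h_fin)
  obtain ⟨p, hp_inj, hp⟩ := exists_injective_forall_mem_of_infinite hb_infinite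
  choose z hz hzp using hp
  refine ⟨z, h_basis.dense_iff.2 fun o ho _ => ?_, by simpa only [hzp] using hp_inj⟩
  rw [hb] at ho
  obtain ⟨n, rfl⟩ := ho
  exact ⟨z n, hz n, n, rfl⟩

lemma isNowhereDense_preimage_singleton {f : Y → Z} (hf : Continuous f) (hf_open : IsOpenMap f)
    {c : Z} (hc : ¬IsOpen {c}) : IsNowhereDense (f ⁻¹' {c}) := by
  rw [(isClosed_singleton.preimage hf).isNowhereDense_iff,
    ← hf_open.preimage_interior_eq_interior_preimage hf]
  rcases Set.subset_singleton_iff_eq.1 (interior_subset (s := {c})) with h | h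
  · rw [h, Set.preimage_empty]
  · exact absurd (interior_eq_iff_isOpen.1 h) hc

end TransversalSequences

section Products

variable {X L : Type*} [TopologicalSpace X] [TopologicalSpace L]

variable (X L) in
/-- The homomorphism `φ ↦ ψ_φ`, where `ψ_φ (k, ℓ) = (φ k, ℓ)`. -/
def prodReflHom : (X ≃ₜ X) →* (X × L ≃ₜ X × L) where
  toFun φ := φ.prodCongr (Homeomorph.refl L)
  map_one' := rfl
  map_mul' _ _ := rfl

lemma exists_eq_prodReflHom [Nonempty L] {σ : X × L ≃ₜ X × L}
    (h_fst : ∀ x ℓ ℓ', (σ (x, ℓ)).1 = (σ (x, ℓ')).1) (h_snd : ∀ t, (σ t).2 = t.2) :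
    ∃ φ : X ≃ₜ X, σ = prodReflHom X L φ := by
  obtain ⟨ℓ₀⟩ := ‹Nonempty L›
  have hσ : ∀ x ℓ, σ (x, ℓ) = ((σ (x, ℓ₀)).1, ℓ) := fun x ℓ => Prod.ext (h_fst x ℓ ℓ₀) (h_snd _)
  let φ : X ≃ₜ X :=
    { toFun := fun x => (σ (x, ℓ₀)).1
      invFun := fun y => (σ.symm (y, ℓ₀)).1
      left_inv := fun x => by beta_reduce; rw [← hσ, σ.symm_apply_apply]
      right_inv := fun y => by
        beta_reduce
        rw [h_fst _ ℓ₀ (σ.symm (y, ℓ₀)).2, Prod.mk.eta, σ.apply_symm_apply]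
      continuous_toFun := continuous_fst.comp (σ.continuous.comp (.prodMk_left ℓ₀))
      continuous_invFun := continuous_fst.comp (σ.symm.continuous.comp (.prodMk_left ℓ₀)) }
  exact ⟨φ, Homeomorph.ext fun t => hσ t.1 t.2⟩

variable {G : Subgroup (X ≃ₜ X)} {z : ℕ → X × L}

lemma homeoOrbit_map_prodReflHom_subset (t : X × L) :
    homeoOrbit (G.map (prodReflHom X L)) t ⊆ Prod.snd ⁻¹' {t.2} := by
  rintro _ ⟨_, ⟨φ, -, rfl⟩, rfl⟩
  rfl

variable [T2Space X] [T2Space L] [LocallyCompactSpace X] [LocallyCompactSpace L]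
  {σ : X × L ≃ₜ X × L}

lemma snd_apply_eq_of_orbitSeminorm_compOp (hz : Function.Injective fun n => (z n).2)
    (hσ : ∀ f, orbitSeminorm (G.map (prodReflHom X L)) z (compOp σ f) =
      orbitSeminorm (G.map (prodReflHom X L)) z f) (n : ℕ) : (σ (z n)).2 = (z n).2 := by
  refine eq_of_forall_exists_le_eq (q := fun n => (σ (z n)).2) hz (fun m => ?_) n
  by_contra! h_ne
  obtain ⟨_, ⟨φ, -, rfl⟩, hφ⟩ := exists_mem_forall_apply_mem_of_orbitSeminorm_compOp hσ
    (isOpen_compl_singleton.preimage continuous_snd) h_ne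
  exact hφ m le_rfl rfl

lemma fst_apply_mem_closure_of_orbitSeminorm_compOp (hz : Function.Injective fun n => (z n).2)
    (hσ : ∀ f, orbitSeminorm (G.map (prodReflHom X L)) z (compOp σ f) =
      orbitSeminorm (G.map (prodReflHom X L)) z f) :
    (fun n => (σ (z n)).1) ∈
      closure ((fun (φ : X ≃ₜ X) n => φ (z n).1) '' (G : Set (X ≃ₜ X))) := by
  refine mem_closure_iff.2 fun o ho hσo => ?_
  obtain ⟨I, u, hu, hIu⟩ := isOpen_pi_iff.1 ho _ hσo
  have hU : IsOpen (⋂ i ∈ I, {t : X × L | t.2 = (z i).2 → t.1 ∈ u i}) :=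
    isOpen_biInter_finset fun i hi => by
      simp only [imp_iff_not_or]
      exact (isOpen_ne_fun continuous_snd continuous_const).union
        ((hu i hi).1.preimage continuous_fst)
  obtain ⟨_, ⟨φ, hφG, rfl⟩, hφ⟩ := exists_mem_forall_apply_mem_of_orbitSeminorm_compOp
    (m := I.sup id) hσ hU fun k _ => Set.mem_iInter₂.2 fun i hi hki => by
      rw [snd_apply_eq_of_orbitSeminorm_compOp hz hσ] at hki
      exact hz hki ▸ (hu i hi).2
  refine ⟨_, hIu fun i hi => ?_, φ, hφG, rfl⟩
  exact Set.mem_iInter₂.1 (hφ i (Finset.le_sup (f := id) hi)) i hi rfl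

end Products

section PointwiseLimits

lemma exists_tendsto_or_tendsto_cocompact {ι Y : Type*} [TopologicalSpace Y] (g : Ultrafilter ι)
    (u : ι → Y) : (∃ y, Tendsto u g (𝓝 y)) ∨ Tendsto u g (cocompact Y) := by
  refine or_iff_not_imp_left.2 fun h_nhds K hK => ?_
  obtain ⟨K', hK', hKK'⟩ := mem_cocompact.1 hK
  refine mem_of_superset (Ultrafilter.compl_mem_iff_notMem.2 fun h_mem => h_nhds ?_) hKK'
  obtain ⟨y, -, hy⟩ := isCompact_iff_ultrafilter_le_nhds'.1 hK' (g.map u) h_mem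
  exact ⟨y, hy⟩

lemma tendsto_uniformity_apply_of_forall_tendsto_iff {ι Y : Type*} [TopologicalSpace Y]
    (f : C₀(Y, ℝ)) {g : Ultrafilter ι} {u v : ι → Y}
    (huv : ∀ y, Tendsto u g (𝓝 y) ↔ Tendsto v g (𝓝 y)) :
    Tendsto (fun i => (f (u i), f (v i))) g (uniformity ℝ) := by
  have h_lim : ∃ c, Tendsto (fun i => f (u i)) g (𝓝 c) ∧ Tendsto (fun i => f (v i)) g (𝓝 c) := by
    rcases exists_tendsto_or_tendsto_cocompact g u with ⟨y, hu⟩ | hu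
    · have hf : Tendsto f (𝓝 y) (𝓝 (f y)) := (map_continuous f).tendsto y
      exact ⟨f y, hf.comp hu, hf.comp ((huv y).1 hu)⟩
    rcases exists_tendsto_or_tendsto_cocompact g v with ⟨y, hv⟩ | hv
    · have hf : Tendsto f (𝓝 y) (𝓝 (f y)) := (map_continuous f).tendsto y
      exact ⟨f y, hf.comp ((huv y).2 hv), hf.comp hv⟩
    · exact ⟨0, (zero_at_infty f).comp hu, (zero_at_infty f).comp hv⟩
  obtain ⟨c, hu, hv⟩ := h_lim
  exact (hu.prodMk_nhds hv).mono_right (nhds_le_uniformity c)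

lemma tendsto_uniformity_of_equicontinuousAt {ι κ X Y : Type*} [TopologicalSpace X]
    [UniformSpace Y] {F : κ → X → Y} {x : X} (hF : EquicontinuousAt F x) {l : Filter ι}
    {k : ι → κ} {u : ι → X} (hu : Tendsto u l (𝓝 x)) :
    Tendsto (fun i => (F (k i) x, F (k i) (u i))) l (uniformity Y) := fun V hV =>
  (hu.eventually (hF V hV)).mono fun i hi => hi (k i)

lemma equicontinuous_of_forall_isCompact {ι X Y : Type*} [PseudoMetricSpace X]
    [WeaklyLocallyCompactSpace X] [PseudoMetricSpace Y] {s : Set ι} {F : ι → X → Y}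
    (h : ∀ K : Set X, IsCompact K → ∀ ε > 0, ∃ δ > 0,
      ∀ x ∈ K, ∀ y ∈ K, dist x y < δ → ∀ i ∈ s, dist (F i x) (F i y) < ε) :
    Equicontinuous fun i : s => F i := by
  refine fun x => Metric.equicontinuousAt_iff_right.2 fun ε hε => ?_
  obtain ⟨K, hK, hxK⟩ := exists_compact_mem_nhds x
  obtain ⟨δ, hδ, hK_equi⟩ := h K hK ε hε
  filter_upwards [hxK, ball_mem_nhds x hδ] with y hyK hyδ i
  exact hK_equi x (mem_of_mem_nhds hxK) y hyK (mem_ball'.1 hyδ) i i.2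

section UniformSpace

variable {ι X : Type*} [UniformSpace X] {l : Filter ι} {φ : ι → X ≃ₜ X} {Φ : X ≃ₜ X}

lemma tendsto_symm_apply_of_equicontinuous (h_symm : Equicontinuous fun i x => (φ i).symm x)
    (hφ : ∀ x, Tendsto (fun i => φ i x) l (𝓝 (Φ x))) (y : X) :
    Tendsto (fun i => (φ i).symm y) l (𝓝 (Φ.symm y)) := by
  have h_lim : Tendsto (fun i => φ i (Φ.symm y)) l (𝓝 y) := by
    simpa only [Φ.apply_symm_apply] using hφ (Φ.symm y)
  refine Uniform.tendsto_nhds_left.2 ?_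
  simpa only [id_eq, Homeomorph.symm_apply_apply] using
    tendsto_uniformity_of_equicontinuousAt (k := id) (h_symm y) h_lim

lemma tendsto_compOp_of_equicontinuous (h_equi : Equicontinuous fun i x => φ i x)
    (h_symm : Equicontinuous fun i x => (φ i).symm x)
    (hφ : ∀ x, Tendsto (fun i => φ i x) l (𝓝 (Φ x))) (f : C₀(X, ℝ)) :
    Tendsto (fun i => compOp (φ i) f) l (𝓝 (compOp Φ f)) := by
  rw [ZeroAtInftyContinuousMap.tendsto_iff_tendstoUniformly, tendstoUniformly_iff_tendsto,
    tendsto_iff_ultrafilter]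
  intro g hg
  -- Equicontinuity of `φ` and of its inverses gives `Φ x` and `φ i x` the same limits along `g`.
  have hg_fst : Tendsto Prod.fst (g : Filter (ι × X)) l := tendsto_fst.mono_left hg
  refine tendsto_uniformity_apply_of_forall_tendsto_iff f (u := fun q : ι × X => Φ q.2)
    (v := fun q : ι × X => φ q.1 q.2) fun y => ⟨fun hu => ?_, fun hv => ?_⟩
  · have h_snd : Tendsto Prod.snd (g : Filter (ι × X)) (𝓝 (Φ.symm y)) := by
      simpa only [Function.comp_def, Φ.symm_apply_apply] using
        (Φ.symm.continuous.tendsto y).comp hu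
    have h_lim := (hφ (Φ.symm y)).comp hg_fst
    rw [Φ.apply_symm_apply] at h_lim
    exact h_lim.congr_uniformity (tendsto_uniformity_of_equicontinuousAt (h_equi _) h_snd)
  · have h_lim := (tendsto_symm_apply_of_equicontinuous h_symm hφ y).comp hg_fst
    have h_snd : Tendsto Prod.snd (g : Filter (ι × X)) (𝓝 (Φ.symm y)) := by
      simpa only [Homeomorph.symm_apply_apply] using
        h_lim.congr_uniformity
          (tendsto_uniformity_of_equicontinuousAt (k := Prod.fst) (h_symm y) hv)
    simpa only [Function.comp_def, Φ.apply_symm_apply] using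
      (Φ.continuous.tendsto _).comp h_snd

end UniformSpace

end PointwiseLimits

section RelativelySOTClosed

/-- Relative closedness, for the strong operator topology, of the group of composition operators
`C_φ` (`φ ∈ G`): a lattice isometry of `C₀(X)` that is the limit of a sequence in the group
lies in it. -/
def IsRelativelySOTClosed {X : Type*} [TopologicalSpace X] (G : Subgroup (X ≃ₜ X)) : Prop :=
  ∀ φ : ℕ → X ≃ₜ X, (∀ n, φ n ∈ G) → ∀ T : C₀(X, ℝ) ≃ₗᵢ[ℝ] C₀(X, ℝ),
    (∀ f g : C₀(X, ℝ), T (c0sup f g) = c0sup (T f) (T g)) →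
    (∀ f : C₀(X, ℝ), Tendsto (fun n => ‖compOp (φ n) f - T f‖) atTop (𝓝 0)) →
    ∃ φ ∈ G, ∀ f : C₀(X, ℝ), T f = compOp φ f

variable {X : Type*} [UniformSpace X] [T2Space X] [LocallyCompactSpace X]
  {G : Subgroup (X ≃ₜ X)}

lemma mem_of_isRelativelySOTClosed_of_tendsto
    (hG_equi : Equicontinuous fun (φ : G) x => (φ : X ≃ₜ X) x) (hG : IsRelativelySOTClosed G)
    {φ : ℕ → X ≃ₜ X} (hφG : ∀ n, φ n ∈ G) {Φ : X ≃ₜ X}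
    (hφ : ∀ x, Tendsto (fun n => φ n x) atTop (𝓝 (Φ x))) : Φ ∈ G := by
  have h_equi := hG_equi.comp fun n => ⟨φ n, hφG n⟩
  have h_symm := hG_equi.comp fun n => (⟨φ n, hφG n⟩ : G)⁻¹
  obtain ⟨θ, hθG, hθ⟩ := hG φ hφG (compOpIsometry Φ) (fun _ _ => rfl) fun f =>
    tendsto_iff_norm_sub_tendsto_zero.1 (tendsto_compOp_of_equicontinuous h_equi h_symm hφ f)
  have h_eq : Φ = θ := Homeomorph.ext fun x => eq_of_forall_mul_apply_eq (c := 1) fun f => by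
    rw [one_mul]
    exact DFunLike.congr_fun (hθ f) x
  exact h_eq ▸ hθG

end RelativelySOTClosed

section ProductDisplay

variable {X L : Type*} [UniformSpace X] [T2Space X] [LocallyCompactSpace X]
  [TopologicalSpace L] [T2Space L] [LocallyCompactSpace L]
  {G : Subgroup (X ≃ₜ X)} {z : ℕ → X × L} {σ : X × L ≃ₜ X × L}

lemma exists_seq_tendsto_fst_of_orbitSeminorm_compOp [FirstCountableTopology X]
    (hG_equi : Equicontinuous fun (φ : G) x => (φ : X ≃ₜ X) x) (hz_dense : DenseRange z)
    (hz_inj : Function.Injective fun n => (z n).2)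
    (hσ : ∀ f, orbitSeminorm (G.map (prodReflHom X L)) z (compOp σ f) =
      orbitSeminorm (G.map (prodReflHom X L)) z f) :
    ∃ φ : ℕ → X ≃ₜ X, (∀ m, φ m ∈ G) ∧
      ∀ t, Tendsto (fun m => φ m t.1) atTop (𝓝 (σ t).1) := by
  obtain ⟨x, hx, hx_lim⟩ := mem_closure_iff_seq_limit.1
    (fst_apply_mem_closure_of_orbitSeminorm_compOp hz_inj hσ)
  choose φ hφG hφx using hx
  have h_range : ∀ n, Tendsto (fun m => φ m (z n).1) atTop (𝓝 (σ (z n)).1) := fun n => by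
    simpa only [← hφx] using tendsto_pi_nhds.1 hx_lim n
  have h_equi : Equicontinuous fun m (t : X × L) => φ m t.1 := fun t V hV =>
    continuous_fst.continuousAt.eventually ((hG_equi t.1 V hV).mono fun x hx m =>
      hx ⟨φ m, hφG m⟩)
  exact ⟨φ, hφG, fun t => isClosed_property hz_dense
    (h_equi.isClosed_setOfPred_tendsto (continuous_fst.comp σ.continuous)) h_range t⟩

lemma exists_mem_eq_prodReflHom_of_orbitSeminorm_compOp [FirstCountableTopology X] [Nonempty L]
    (hG_equi : Equicontinuous fun (φ : G) x => (φ : X ≃ₜ X) x) (hG : IsRelativelySOTClosed G)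
    (hz_dense : DenseRange z) (hz_inj : Function.Injective fun n => (z n).2)
    (hσ : ∀ f, orbitSeminorm (G.map (prodReflHom X L)) z (compOp σ f) =
      orbitSeminorm (G.map (prodReflHom X L)) z f) :
    ∃ φ ∈ G, σ = prodReflHom X L φ := by
  obtain ⟨φ, hφG, hφ⟩ :=
    exists_seq_tendsto_fst_of_orbitSeminorm_compOp hG_equi hz_dense hz_inj hσ
  have h_snd : ∀ t, (σ t).2 = t.2 := congrFun <| hz_dense.equalizer
    (continuous_snd.comp σ.continuous) continuous_snd
    (funext (snd_apply_eq_of_orbitSeminorm_compOp hz_inj hσ))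
  obtain ⟨Φ, rfl⟩ := exists_eq_prodReflHom
    (fun x ℓ ℓ' => tendsto_nhds_unique (hφ (x, ℓ)) (hφ (x, ℓ'))) h_snd
  obtain ⟨ℓ⟩ := ‹Nonempty L›
  exact ⟨Φ, mem_of_isRelativelySOTClosed_of_tendsto hG_equi hG hφG fun x => hφ (x, ℓ), rfl⟩

end ProductDisplay

theorem stmt13_general {X : Type*} [UniformSpace X] [T2Space X] [SecondCountableTopology X]
    [LocallyCompactSpace X] (G : Subgroup (X ≃ₜ X))
    (hG_equi : Equicontinuous fun (φ : G) x => (φ : X ≃ₜ X) x) (hG : IsRelativelySOTClosed G)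
    {L : Type*} [TopologicalSpace L] [T2Space L] [SecondCountableTopology L]
    [LocallyCompactSpace L] (hL : ∀ ℓ : L, ¬IsOpen ({ℓ} : Set L)) :
    ∃ N : C₀(X × L, ℝ) → ℝ,
      (∀ x y : C₀(X × L, ℝ), N (x + y) ≤ N x + N y) ∧
      (∀ (c : ℝ) (x : C₀(X × L, ℝ)), N (c • x) = |c| * N x) ∧
      (∀ x y : C₀(X × L, ℝ), (∀ t, |x t| ≤ |y t|) → N x ≤ N y) ∧
      (∃ c > 0, ∃ C : ℝ, ∀ x : C₀(X × L, ℝ), c * ‖x‖ ≤ N x ∧ N x ≤ C * ‖x‖) ∧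
      (∀ φ ∈ G, ∀ x : C₀(X × L, ℝ),
        N (compOp (φ.prodCongr (Homeomorph.refl L)) x) = N x) ∧
      (∀ T : C₀(X × L, ℝ) ≃L[ℝ] C₀(X × L, ℝ),
        (∀ f g : C₀(X × L, ℝ), T (c0sup f g) = c0sup (T f) (T g)) →
        (∀ x : C₀(X × L, ℝ), N (T x) = N x) →
        ∃ φ ∈ G, ∀ f : C₀(X × L, ℝ),
          T f = compOp (φ.prodCongr (Homeomorph.refl L)) f) := by
  rcases isEmpty_or_nonempty (X × L) with h_empty | h_nonempty
  · have h_eq : ∀ f g : C₀(X × L, ℝ), f = g := ZeroAtInftyContinuousMap.eq_of_empty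
    exact ⟨0, by simp, by simp, by simp, ⟨1, one_pos, 0, fun f => by simp [h_eq f 0]⟩, by simp,
      fun T _ _ => ⟨1, G.one_mem, fun f => h_eq _ _⟩⟩
  obtain ⟨z, hz_dense, hz_inj⟩ := exists_denseRange_injective_comp
    (isOpenMap_snd : IsOpenMap (Prod.snd : X × L → L)) hL
  have : Nonempty L := h_nonempty.map Prod.snd
  have hz_orbit : ∀ n, IsNowhereDense (homeoOrbit (G.map (prodReflHom X L)) (z n)) := fun n =>
    (isNowhereDense_preimage_singleton continuous_snd isOpenMap_snd (hL _)).mono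
      (homeoOrbit_map_prodReflHom_subset (z n))
  refine ⟨displayNorm (G.map (prodReflHom X L)) z, map_add_le_add _, map_smul_eq_mul _,
    fun _ _ => displayNorm_mono, ⟨1, one_pos, 5 / 2, fun f =>
      ⟨(one_mul _).trans_le (norm_le_displayNorm f), displayNorm_le f⟩⟩,
    fun φ hφ => displayNorm_compOp ⟨φ, hφ, rfl⟩, fun T hT hN => ?_⟩
  obtain ⟨σ, hσ⟩ := exists_forall_eq_compOp_of_displayNorm hz_orbit T hT hN
  have hσ_orbit := fun f => orbitSeminorm_compOp_of_displayNorm_compOp (hσ f ▸ hN f)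
  obtain ⟨φ, hφG, rfl⟩ :=
    exists_mem_eq_prodReflHom_of_orbitSeminorm_compOp hG_equi hG hz_dense hz_inj hσ_orbit
  exact ⟨φ, hφG, hσ⟩

/-- **Theorem 5.2.** Let `X` be a locally compact Polish space with a complete compatible
metric, and `G` a relatively SOT-closed group of homeomorphisms of `X`, equicontinuous on
compact sets. For any locally compact Polish space `L` with no isolated points, `G` is
displayable on `C₀(X × L)` via `ψ_φ(k, ℓ) = (φ(k), ℓ)`: there is an equivalent lattice
norm `N` on `C₀(X × L)`, invariant under the operators `C_{ψ_φ}` (`φ ∈ G`), whose lattice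
isometries are exactly these operators. -/
theorem stmt13 {X : Type*} [MetricSpace X] [CompleteSpace X] [SecondCountableTopology X]
    [LocallyCompactSpace X]
    (G : Set (X ≃ₜ X)) (h_id : Homeomorph.refl X ∈ G)
    (h_comp : ∀ φ ∈ G, ∀ ψ ∈ G, φ.trans ψ ∈ G) (h_inv : ∀ φ ∈ G, φ.symm ∈ G)
    (h_equi : ∀ K : Set X, IsCompact K → ∀ ε > 0, ∃ δ > 0,
      ∀ x ∈ K, ∀ y ∈ K, dist x y < δ → ∀ φ ∈ G, dist (φ x) (φ y) < ε)
    (h_closed : ∀ φn : ℕ → X ≃ₜ X, (∀ n, φn n ∈ G) →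
      ∀ T : C₀(X, ℝ) ≃ₗᵢ[ℝ] C₀(X, ℝ),
        (∀ f g : C₀(X, ℝ), T (c0sup f g) = c0sup (T f) (T g)) →
        (∀ f : C₀(X, ℝ), Tendsto (fun n => ‖compOp (φn n) f - T f‖) atTop (𝓝 0)) →
        ∃ φ ∈ G, ∀ f : C₀(X, ℝ), T f = compOp φ f)
    {L : Type*} [TopologicalSpace L] [PolishSpace L] [LocallyCompactSpace L]
    (hL : ∀ ℓ : L, ¬IsOpen ({ℓ} : Set L)) :
    ∃ N : C₀(X × L, ℝ) → ℝ,
      (∀ x y : C₀(X × L, ℝ), N (x + y) ≤ N x + N y) ∧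
      (∀ (c : ℝ) (x : C₀(X × L, ℝ)), N (c • x) = |c| * N x) ∧
      (∀ x y : C₀(X × L, ℝ), (∀ t, |x t| ≤ |y t|) → N x ≤ N y) ∧
      (∃ c > 0, ∃ C : ℝ, ∀ x : C₀(X × L, ℝ), c * ‖x‖ ≤ N x ∧ N x ≤ C * ‖x‖) ∧
      (∀ φ ∈ G, ∀ x : C₀(X × L, ℝ),
        N (compOp (φ.prodCongr (Homeomorph.refl L)) x) = N x) ∧
      (∀ T : C₀(X × L, ℝ) ≃L[ℝ] C₀(X × L, ℝ),
        (∀ f g : C₀(X × L, ℝ), T (c0sup f g) = c0sup (T f) (T g)) →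
        (∀ x : C₀(X × L, ℝ), N (T x) = N x) →
        ∃ φ ∈ G, ∀ f : C₀(X × L, ℝ),
          T f = compOp (φ.prodCongr (Homeomorph.refl L)) f) :=
  stmt13_general
    { carrier := G
      mul_mem' := fun hφ hψ => h_comp _ hψ _ hφ
      one_mem' := h_id
      inv_mem' := h_inv _ }
    (equicontinuous_of_forall_isCompact h_equi) h_closed hL

end
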